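/- Let T > 0 with T ≤ 1 or more generally Δt ≤ 1, let u : [0, T] → ℝ be twice continuously differentiable with |u″(t)| ≤ C for all t ∈ [0, T], let 0 < α < 1, let n be a positive integer, Δt = T/n, t_j = j·Δt, and let 1 ≤ k ≤ n. Let L1 be the piecewise linear interpolant of the values u(t₀), …, u(t_n). Then there is an absolute constant c (independent of u, C, α, k, n, Δt, T) such that |(1/Γ(1−α)) · ∫_0^{t_k} (u′(τ) − L1′(τ)) · (t_k − τ)^{−α} dτ| ≤ c·C·Δt^{2−α}. -/

import Mathlib

/-!
On a cell `[a, b]` the error derivative `u' - D`, with `D` the slope of the chord of `u`, is at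
most `C (b - a)` in absolute value (`abs_deriv_sub_slope_le`) and has integral zero.  Hence on a
cell where the kernel `w` is increasing and bounded, `w` may be replaced by `w - w a`, and the
contribution of the cell is at most `C (b - a)² (w b - w a)` (`abs_integral_cell_le`).  For
`w τ = (t_k - τ)^{-α}` these bounds telescope over the first `k - 1` cells to at most
`C Δt² w(t_{k-1}) = C Δt^{2-α}`.  On the last cell the kernel is singular but integrable, and its
contribution is at most `C Δt · Δt^{1-α} / (1 - α)` (`abs_integral_last_cell_le`).  Finally
`1 / Γ(1-α) = (1-α) / Γ(2-α)` absorbs the factor `1 / (1 - α)`, and `Γ` is bounded below by a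
positive constant on `[1, 2]`, which makes the bound uniform in `α`.
-/

theorem abs_deriv_sub_slope_le {a b C : ℝ} (hab : a < b) {u u' u'' : ℝ → ℝ}
    (h1 : ∀ s ∈ Set.Icc a b, HasDerivWithinAt u (u' s) (Set.Icc a b) s)
    (h2 : ∀ s ∈ Set.Icc a b, HasDerivWithinAt u' (u'' s) (Set.Icc a b) s)
    (hC : ∀ s ∈ Set.Icc a b, |u'' s| ≤ C) {τ : ℝ} (hτ : τ ∈ Set.Icc a b) :
    |u' τ - (u b - u a) / (b - a)| ≤ C * (b - a) := by
  obtain ⟨ξ, hξ, hξ'⟩ := exists_hasDerivAt_eq_slope u u' hab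
    (fun s hs => (h1 s hs).continuousWithinAt)
    (fun s hs => (h1 s (Set.Ioo_subset_Icc_self hs)).hasDerivAt (Icc_mem_nhds hs.1 hs.2))
  have hξm := Set.Ioo_subset_Icc_self hξ
  have hC0 : 0 ≤ C := (abs_nonneg _).trans (hC τ hτ)
  rw [← hξ']
  have h := (convex_Icc a b).norm_image_sub_le_of_norm_hasDerivWithin_le h2 hC hξm hτ
  simp only [Real.norm_eq_abs] at h
  refine h.trans (mul_le_mul_of_nonneg_left ?_ hC0)
  rw [abs_le]
  constructor <;> linarith [hτ.1, hτ.2, hξm.1, hξm.2]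

theorem abs_integral_cell_le {a b C : ℝ} (hab : a < b) {u u' u'' w : ℝ → ℝ}
    (h1 : ∀ s ∈ Set.Icc a b, HasDerivWithinAt u (u' s) (Set.Icc a b) s)
    (h2 : ∀ s ∈ Set.Icc a b, HasDerivWithinAt u' (u'' s) (Set.Icc a b) s)
    (hC : ∀ s ∈ Set.Icc a b, |u'' s| ≤ C) (hw : MonotoneOn w (Set.Icc a b)) :
    |∫ τ in a..b, (u' τ - (u b - u a) / (b - a)) * w τ|
      ≤ C * (b - a) ^ 2 * (w b - w a) := by
  have hcu' : ContinuousOn u' (Set.uIcc a b) := by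
    rw [Set.uIcc_of_le hab.le]; exact fun s hs => (h2 s hs).continuousWithinAt
  have hce : ContinuousOn (fun τ => u' τ - (u b - u a) / (b - a)) (Set.uIcc a b) :=
    hcu'.sub continuousOn_const
  have hwi : IntervalIntegrable w MeasureTheory.volume a b :=
    MonotoneOn.intervalIntegrable (by rwa [Set.uIcc_of_le hab.le])
  have hC0 : 0 ≤ C := (abs_nonneg _).trans (hC a (Set.left_mem_Icc.2 hab.le))
  -- The fundamental theorem of calculus: the error derivative has mean zero on the cell.
  have hzero : ∫ τ in a..b, (u' τ - (u b - u a) / (b - a)) = 0 := by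
    rw [intervalIntegral.integral_sub hcu'.intervalIntegrable intervalIntegrable_const,
      intervalIntegral.integral_eq_sub_of_hasDerivAt_of_le hab.le
        (fun s hs => (h1 s hs).continuousWithinAt)
        (fun s hs => (h1 s (Set.Ioo_subset_Icc_self hs)).hasDerivAt (Icc_mem_nhds hs.1 hs.2))
        hcu'.intervalIntegrable, intervalIntegral.integral_const, smul_eq_mul]
    have : b - a ≠ 0 := by linarith
    field_simp
    ring
  have hshift : ∫ τ in a..b, (u' τ - (u b - u a) / (b - a)) * w τ
      = ∫ τ in a..b, (u' τ - (u b - u a) / (b - a)) * (w τ - w a) := by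
    simp only [mul_sub _ (w _) (w a)]
    rw [intervalIntegral.integral_sub (hwi.continuousOn_mul hce)
      (hce.intervalIntegrable.mul_const _), intervalIntegral.integral_mul_const, hzero]
    ring
  rw [hshift]
  have h := intervalIntegral.norm_integral_le_of_norm_le_const (a := a) (b := b)
    (C := C * (b - a) * (w b - w a))
    (f := fun τ => (u' τ - (u b - u a) / (b - a)) * (w τ - w a)) (by
      intro τ hτ
      rw [Set.uIoc_of_le hab.le] at hτ
      have hm := Set.Ioc_subset_Icc_self hτ
      have ha := Set.left_mem_Icc.2 hab.le
      have hb := Set.right_mem_Icc.2 hab.le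
      rw [norm_mul, Real.norm_eq_abs, Real.norm_eq_abs,
        abs_of_nonneg (sub_nonneg.2 (hw ha hm hm.1))]
      refine mul_le_mul (abs_deriv_sub_slope_le hab h1 h2 hC hm) ?_
        (sub_nonneg.2 (hw ha hm hm.1)) (mul_nonneg hC0 (by linarith))
      linarith [hw hm hb hm.2])
  rw [abs_of_pos (sub_pos.2 hab)] at h
  calc _ ≤ _ := h
    _ = _ := by ring

theorem intervalIntegrable_kernel {α : ℝ} (hα : α < 1) (x a b : ℝ) :
    IntervalIntegrable (fun τ => (x - τ) ^ (-α)) MeasureTheory.volume a b := by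
  have h := (intervalIntegral.intervalIntegrable_rpow' (r := -α) (by linarith)
    (a := x - a) (b := x - b)).comp_sub_left x
  simpa using h

theorem abs_integral_last_cell_le {a b C α : ℝ} (hab : a < b) (hα : α < 1) {u u' u'' : ℝ → ℝ}
    (h1 : ∀ s ∈ Set.Icc a b, HasDerivWithinAt u (u' s) (Set.Icc a b) s)
    (h2 : ∀ s ∈ Set.Icc a b, HasDerivWithinAt u' (u'' s) (Set.Icc a b) s)
    (hC : ∀ s ∈ Set.Icc a b, |u'' s| ≤ C) :
    |∫ τ in a..b, (u' τ - (u b - u a) / (b - a)) * (b - τ) ^ (-α)|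
      ≤ C * (b - a) * ((b - a) ^ (1 - α) / (1 - α)) := by
  have h := intervalIntegral.norm_integral_le_of_norm_le (μ := MeasureTheory.volume)
    (f := fun τ => (u' τ - (u b - u a) / (b - a)) * (b - τ) ^ (-α))
    (g := fun τ => C * (b - a) * (b - τ) ^ (-α)) hab.le
    (Filter.Eventually.of_forall (by
      intro τ hτ
      have hm := Set.Ioc_subset_Icc_self hτ
      have hp : 0 ≤ (b - τ) ^ (-α) := Real.rpow_nonneg (by linarith [hm.2]) _
      rw [norm_mul, Real.norm_eq_abs, Real.norm_eq_abs, abs_of_nonneg hp]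
      exact mul_le_mul_of_nonneg_right (abs_deriv_sub_slope_le hab h1 h2 hC hm) hp))
    ((intervalIntegrable_kernel hα b a b).const_mul _)
  rw [intervalIntegral.integral_const_mul,
    intervalIntegral.integral_comp_sub_left (fun x => x ^ (-α)) b, sub_self,
    integral_rpow (Or.inl (by linarith)), Real.zero_rpow (by linarith), sub_zero,
    show -α + 1 = 1 - α by ring] at h
  exact h

theorem exists_pos_le_Gamma_Icc : ∃ m : ℝ, 0 < m ∧ ∀ s ∈ Set.Icc (1 : ℝ) 2, m ≤ Real.Gamma s := by
  have hc : ContinuousOn Real.Gamma (Set.Icc (1 : ℝ) 2) := fun s hs =>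
    (Real.differentiableAt_Gamma fun j => by
      have := hs.1
      have := Nat.cast_nonneg (α := ℝ) j
      linarith).continuousAt.continuousWithinAt
  obtain ⟨x, hx, hmin⟩ := isCompact_Icc.exists_isMinOn (Set.nonempty_Icc.2 one_le_two) hc
  exact ⟨Real.Gamma x, Real.Gamma_pos_of_pos (by linarith [hx.1]), fun s hs => hmin hs⟩

/-- Uniform truncation error of the L1 formula for a solution with bounded second
derivative (Lemma 3, nonsingular case): there is an absolute constant `c > 0` such
that for every `T > 0`, every `u` twice continuously differentiable on `[0,T]` with
`|u''| ≤ C`, every `0 < α < 1`, every grid `t_j = jΔt` with `Δt = T/n ≤ 1`, and every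
`1 ≤ k ≤ n`,
`|(1/Γ(1-α)) ∫_0^{t_k} (u'(τ) - L1'(τ)) (t_k - τ)^{-α} dτ| ≤ c C Δt^{2-α}`,
where `L1'` is the derivative of the piecewise linear interpolant of `u(t₀),…,u(t_n)`,
i.e. the piecewise constant `(u(t_l) - u(t_{l-1}))/Δt` on `[t_{l-1}, t_l)`. -/
theorem l1_truncation_error_uniform :
    ∃ c : ℝ, 0 < c ∧
      ∀ (T : ℝ), 0 < T →
      ∀ (C : ℝ) (u u' u'' : ℝ → ℝ),
        (∀ s ∈ Set.Icc (0 : ℝ) T, HasDerivWithinAt u (u' s) (Set.Icc 0 T) s) →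
        (∀ s ∈ Set.Icc (0 : ℝ) T, HasDerivWithinAt u' (u'' s) (Set.Icc 0 T) s) →
        ContinuousOn u'' (Set.Icc 0 T) →
        (∀ s ∈ Set.Icc (0 : ℝ) T, |u'' s| ≤ C) →
      ∀ (α : ℝ), 0 < α → α < 1 →
      ∀ (n : ℕ), 0 < n →
      ∀ (Δt : ℝ), Δt = T / n → Δt ≤ 1 →
      ∀ (t : ℕ → ℝ), (∀ j, t j = (j : ℝ) * Δt) →
      ∀ (L1d : ℝ → ℝ),
        (∀ l, 1 ≤ l → l ≤ n → ∀ τ ∈ Set.Ico (t (l - 1)) (t l),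
          L1d τ = (u (t l) - u (t (l - 1))) / Δt) →
      ∀ (k : ℕ), 1 ≤ k → k ≤ n →
        |(1 / Real.Gamma (1 - α)) *
            ∫ τ in (0 : ℝ)..(t k), (u' τ - L1d τ) * (t k - τ) ^ (-α)|
          ≤ c * C * Δt ^ (2 - α) := by
  obtain ⟨m, hm, hmG⟩ := exists_pos_le_Gamma_Icc
  refine ⟨2 / m, by positivity, ?_⟩
  intro T hT C u u' u'' h1 h2 _ hC α hα0 hα1 n hn Δt hΔ _ t ht L1d hL k hk1 hkn
  obtain ⟨p, rfl⟩ : ∃ p, k = p + 1 := ⟨k - 1, by omega⟩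
  have hnR : (0 : ℝ) < n := by exact_mod_cast hn
  have hΔ0 : 0 < Δt := by rw [hΔ]; positivity
  have hT' : T = n * Δt := by rw [hΔ]; field_simp
  have hC0 : 0 ≤ C := (abs_nonneg _).trans (hC 0 ⟨le_rfl, hT.le⟩)
  have hstep : ∀ i, t (i + 1) - t i = Δt := fun i => by rw [ht, ht]; push_cast; ring
  have hlt : ∀ i, t i < t (i + 1) := fun i => by linarith [hstep i]
  have hmono : Monotone t := monotone_nat_of_le_succ fun i => (hlt i).le
  have ht0 : t 0 = 0 := by simp [ht]
  have htn : t n = T := by rw [ht, hT']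
  have hsub : ∀ i < p + 1, Set.Icc (t i) (t (i + 1)) ⊆ Set.Icc 0 T := fun i hi =>
    Set.Icc_subset_Icc (ht0 ▸ hmono (Nat.zero_le i)) (htn ▸ hmono (by omega))
  have g1 : ∀ i < p + 1, ∀ s ∈ Set.Icc (t i) (t (i + 1)),
      HasDerivWithinAt u (u' s) (Set.Icc (t i) (t (i + 1))) s :=
    fun i hi s hs => (h1 s (hsub i hi hs)).mono (hsub i hi)
  have g2 : ∀ i < p + 1, ∀ s ∈ Set.Icc (t i) (t (i + 1)),
      HasDerivWithinAt u' (u'' s) (Set.Icc (t i) (t (i + 1))) s :=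
    fun i hi s hs => (h2 s (hsub i hi hs)).mono (hsub i hi)
  have gC : ∀ i < p + 1, ∀ s ∈ Set.Icc (t i) (t (i + 1)), |u'' s| ≤ C :=
    fun i hi s hs => hC s (hsub i hi hs)
  set w : ℝ → ℝ := fun τ => (t (p + 1) - τ) ^ (-α) with hw
  -- On the open cell `L1d` is the slope of the chord; the endpoints form a null set.
  have hcongr : ∀ i < p + 1, Set.EqOn
      (fun τ => (u' τ - (u (t (i + 1)) - u (t i)) / (t (i + 1) - t i)) * w τ)
      (fun τ => (u' τ - L1d τ) * w τ) (Set.Ioo (t i) (t (i + 1))) := by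
    intro i hi τ hτ
    have := hL (i + 1) (by omega) (by omega) τ (by simpa using Set.Ioo_subset_Ico_self hτ)
    simp only [this, hstep, Nat.add_sub_cancel]
  have hint : ∀ i < p + 1, IntervalIntegrable (fun τ => (u' τ - L1d τ) * w τ)
      MeasureTheory.volume (t i) (t (i + 1)) := by
    intro i hi
    have h0 : IntervalIntegrable
        (fun τ => (u' τ - (u (t (i + 1)) - u (t i)) / (t (i + 1) - t i)) * w τ)
        MeasureTheory.volume (t i) (t (i + 1)) := by
      refine (intervalIntegrable_kernel hα1 (t (p + 1)) _ _).continuousOn_mul ?_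
      rw [Set.uIcc_of_le (hlt i).le]
      exact ContinuousOn.sub (fun s hs => (g2 i hi s hs).continuousWithinAt) continuousOn_const
    rw [intervalIntegrable_iff_integrableOn_Ioo_of_le (hlt i).le] at h0 ⊢
    exact h0.congr_fun (hcongr i hi) measurableSet_Ioo
  have hinteq : ∀ i < p + 1, ∫ τ in t i..t (i + 1), (u' τ - L1d τ) * w τ
      = ∫ τ in t i..t (i + 1),
        (u' τ - (u (t (i + 1)) - u (t i)) / (t (i + 1) - t i)) * w τ := by
    intro i hi
    rw [intervalIntegral.integral_of_le (hlt i).le, intervalIntegral.integral_of_le (hlt i).le,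
      MeasureTheory.integral_Ioc_eq_integral_Ioo, MeasureTheory.integral_Ioc_eq_integral_Ioo]
    exact (MeasureTheory.setIntegral_congr_fun measurableSet_Ioo (hcongr i hi)).symm
  have hcell : ∀ i ∈ Finset.range p, |∫ τ in t i..t (i + 1), (u' τ - L1d τ) * w τ|
      ≤ C * Δt ^ 2 * (w (t (i + 1)) - w (t i)) := by
    intro i hi
    have hi := Finset.mem_range.1 hi
    rw [hinteq i (by omega), ← hstep i]
    refine abs_integral_cell_le (hlt i) (g1 i (by omega)) (g2 i (by omega)) (gC i (by omega)) ?_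
    intro x hx y hy hxy
    have hy1 : y < t (p + 1) := hy.2.trans_lt ((hmono (by omega)).trans_lt (hlt p))
    exact Real.rpow_le_rpow_of_nonpos (by linarith) (by linarith) (by linarith)
  have hlast : |∫ τ in t p..t (p + 1), (u' τ - L1d τ) * w τ|
      ≤ C * Δt * (Δt ^ (1 - α) / (1 - α)) := by
    rw [hinteq p (by omega), ← hstep p]
    exact abs_integral_last_cell_le (hlt p) hα1 (g1 p (by omega)) (g2 p (by omega))
      (gC p (by omega))
  have hwp : w (t p) = Δt ^ (-α) := by simp only [hw, hstep]
  have hw0 : 0 ≤ w (t 0) := by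
    refine Real.rpow_nonneg ?_ _
    linarith [hmono (Nat.zero_le (p + 1))]
  have hpow1 : Δt ^ 2 * Δt ^ (-α) = Δt ^ (2 - α) := by
    rw [← Real.rpow_natCast, ← Real.rpow_add hΔ0]; norm_num [sub_eq_add_neg]
  have hpow2 : Δt * Δt ^ (1 - α) = Δt ^ (2 - α) := by
    nth_rewrite 1 [← Real.rpow_one Δt]
    rw [← Real.rpow_add hΔ0]; congr 1; ring
  have hsum : |∫ τ in (0 : ℝ)..t (p + 1), (u' τ - L1d τ) * w τ|
      ≤ C * Δt ^ (2 - α) + C * Δt ^ (2 - α) / (1 - α) := by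
    have hs := intervalIntegral.sum_integral_adjacent_intervals hint
    rw [ht0] at hs
    rw [← hs, Finset.sum_range_succ]
    refine (abs_add_le _ _).trans (add_le_add ?_ ?_)
    · refine (Finset.abs_sum_le_sum_abs _ _).trans ((Finset.sum_le_sum hcell).trans ?_)
      rw [← Finset.mul_sum, Finset.sum_range_sub (fun i => w (t i)), hwp, ← hpow1, mul_assoc]
      gcongr
      linarith
    · refine hlast.trans (le_of_eq ?_)
      rw [← hpow2]; ring
  have hα' : 0 < 1 - α := by linarith
  have hG : 0 < Real.Gamma (1 - α) := Real.Gamma_pos_of_pos hα'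
  have hGm : m ≤ (1 - α) * Real.Gamma (1 - α) := by
    rw [← Real.Gamma_add_one hα'.ne']
    exact hmG _ ⟨by linarith, by linarith⟩
  have hX : 0 ≤ C * Δt ^ (2 - α) := mul_nonneg hC0 (Real.rpow_nonneg hΔ0.le _)
  rw [abs_mul, abs_of_pos (by positivity : 0 < 1 / Real.Gamma (1 - α))]
  calc 1 / Real.Gamma (1 - α) * |∫ τ in (0 : ℝ)..t (p + 1), (u' τ - L1d τ) * w τ|
      ≤ 1 / Real.Gamma (1 - α) * (C * Δt ^ (2 - α) + C * Δt ^ (2 - α) / (1 - α)) := by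
        gcongr
    _ = (2 - α) / ((1 - α) * Real.Gamma (1 - α)) * (C * Δt ^ (2 - α)) := by
        field_simp
        ring
    _ ≤ 2 / m * (C * Δt ^ (2 - α)) := by
        gcongr
        linarith
    _ = 2 / m * C * Δt ^ (2 - α) := by ring
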